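/- For all functions f, g : V* → ℝ, each of finite energy (sup_{n≥0} 𝓔_n(f,f) < ∞ and sup_{n≥0} 𝓔_n(g,g) < ∞), the limit 𝓔(f,g) = lim_{n→∞} 𝓔_n(f,g) exists (as a finite real number), where 𝓔_n(f,g) = (5/3)^n Σ_{{x,y}∈E_n} (f(y)−f(x))(g(y)−g(x)). -/

import Mathlib

open Set MeasureTheory Filter Topology
open scoped Classical ENNReal NNReal BoundedContinuousFunction

noncomputable section

/-- The plane, with the Euclidean norm. -/
abbrev Pt : Type := EuclideanSpace ℝ (Fin 2)

/-- The three vertexes of the initial equilateral triangle. -/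
def ptA : Fin 3 → Pt
  | 0 => (WithLp.equiv 2 (Fin 2 → ℝ)).symm ![0, 0]
  | 1 => (WithLp.equiv 2 (Fin 2 → ℝ)).symm ![1, 0]
  | 2 => (WithLp.equiv 2 (Fin 2 → ℝ)).symm ![1 / 2, Real.sqrt 3 / 2]

/-- The contraction `fᵢ(z) = (z + aᵢ)/2`. -/
def sgMap (i : Fin 3) (z : Pt) : Pt := (2 : ℝ)⁻¹ • (z + ptA i)

/-- The vertex sets `V_n`. -/
def Vn : ℕ → Finset Pt
  | 0 => {ptA 0, ptA 1, ptA 2}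
  | n + 1 => (Vn n).image (sgMap 0) ∪ (Vn n).image (sgMap 1) ∪ (Vn n).image (sgMap 2)

/-- `V* = ⋃ₙ Vₙ`. -/
def Vstar : Set Pt := ⋃ n, (Vn n : Set Pt)

/-- The Sierpinski gasket `V`, the closure of `V*`. -/
def sg : Set Pt := closure Vstar

lemma Vstar_subset_sg {x : Pt} (hx : x ∈ Vstar) : x ∈ sg :=
  subset_closure hx

lemma Vn_subset_sg {n : ℕ} {x : Pt} (hx : x ∈ Vn n) : x ∈ sg :=
  subset_closure (Set.mem_iUnion.mpr ⟨n, hx⟩)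

/-- `{x,y}` is an edge of the graph `Γₙ`. -/
def isEdge (n : ℕ) (x y : Pt) : Prop := ‖x - y‖ = (2 : ℝ) ^ (-(n : ℤ))

/-- The discrete energy form `𝓔ₙ(u,v) = (5/3)ⁿ Σ_{{x,y}∈Eₙ} (u(y)-u(x))(v(y)-v(x))`;
the sum over unordered pairs is written as half the sum over ordered pairs. -/
def energyBi (n : ℕ) (u v : Pt → ℝ) : ℝ :=
  (5 / 3 : ℝ) ^ n * (1 / 2) *
    ∑ x ∈ Vn n, ∑ y ∈ Vn n, if isEdge n x y then (u y - u x) * (v y - v x) else 0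

/-- The discrete energy `𝓔ₙ(u,u)`. -/
def energy (n : ℕ) (u : Pt → ℝ) : ℝ := energyBi n u u

/-- The discrete Laplacian `Δₙ g(x) = 5ⁿ Σ_{y:{x,y}∈Eₙ} (g(y)-g(x))`. -/
def discLap (n : ℕ) (g : Pt → ℝ) (x : Pt) : ℝ :=
  (5 : ℝ) ^ n * ∑ y ∈ Vn n, if isEdge n x y then g y - g x else 0

/-- A function on `V*` has finite energy if `supₙ 𝓔ₙ(u,u) < ∞`. -/
def FiniteEnergy (u : Pt → ℝ) : Prop := BddAbove (Set.range fun n => energy n u)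

/-- The empirical vertex measure `μₙ`, giving mass `3⁻ⁿ` to each point of `Vₙ`. -/
def empMeas (n : ℕ) : Measure Pt :=
  ((3 : ℝ≥0∞) ^ n)⁻¹ • ∑ x ∈ Vn n, Measure.dirac x

/-- Extension by zero of a continuous function on the gasket. -/
def sgExt (f : C(sg, ℝ)) (x : Pt) : ℝ := if hx : x ∈ sg then f ⟨x, hx⟩ else 0

/-- `h(k)! = h(1)⋯h(k)`, with `h(0)! = 1`. -/
def hfact (h : ℕ → ℝ) (k : ℕ) : ℝ := ∏ i ∈ Finset.range k, h (i + 1)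

/-- The partition function `Z(φ) = Σₖ φᵏ/h(k)!`. -/
def Zfun (h : ℕ → ℝ) (φ : ℝ) : ℝ := ∑' k, φ ^ k / hfact h k

/-- The one-site marginal `p_φ(k) = Z(φ)⁻¹ φᵏ/h(k)!`. -/
def pmarg (h : ℕ → ℝ) (φ : ℝ) (k : ℕ) : ℝ := (Zfun h φ)⁻¹ * φ ^ k / hfact h k

/-- The mean of the one-site marginal `p_φ`. -/
def meanFun (h : ℕ → ℝ) (φ : ℝ) : ℝ := ∑' k : ℕ, (k : ℝ) * pmarg h φ k

/-- The zero-range generator on `Ωₙ = ℕ^{Vₙ}`, summing over ordered pairs `(x,y)`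
with `{x,y} ∈ Eₙ`. -/
def zrGen (n : ℕ) (h : ℕ → ℝ) (F : (↥(Vn n) → ℕ) → ℝ) (η : ↥(Vn n) → ℕ) : ℝ :=
  ∑ x : ↥(Vn n), ∑ y : ↥(Vn n),
    if isEdge n x.1 y.1 then
      h (η x) * (F (Function.update (Function.update η x (η x - 1)) y (η y + 1)) - F η)
    else 0

namespace SGaux

abbrev AF := List (Fin 3) → Fin 3 → ℝ

def sh (i : Fin 3) (U : AF) : AF := fun w => U (i :: w)

def D (b : Fin 3 → ℝ) : ℝ := (b 0 - b 1) ^ 2 + (b 1 - b 2) ^ 2 + (b 0 - b 2) ^ 2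

def DB (b c : Fin 3 → ℝ) : ℝ :=
  (b 0 - b 1) * (c 0 - c 1) + (b 1 - b 2) * (c 1 - c 2) + (b 0 - b 2) * (c 0 - c 2)

def J (n : ℕ) (U : AF) : ℝ :=
  (U (0 :: List.replicate n 1) 2 - U (1 :: List.replicate n 0) 2) ^ 2
  + (U (1 :: List.replicate n 2) 0 - U (2 :: List.replicate n 1) 0) ^ 2
  + (U (0 :: List.replicate n 2) 1 - U (2 :: List.replicate n 0) 1) ^ 2

def tE : ℕ → AF → ℝ
  | 0, U => D (U [])
  | n + 1, U => 5 / 3 * (tE n (sh 0 U) + tE n (sh 1 U) + tE n (sh 2 U))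

def xE : ℕ → AF → ℝ
  | 0, _ => 0
  | n + 1, U => 5 / 3 * (xE n (sh 0 U) + xE n (sh 1 U) + xE n (sh 2 U))
      + if n = 0 then 0 else (5 / 3) ^ (n + 1) * J n U

def Compat (U : AF) : Prop :=
  (∀ w i, U (w ++ [i]) i = U w i) ∧ ∀ w i j, U (w ++ [i]) j = U (w ++ [j]) i

def A (i : Fin 3) (b : Fin 3 → ℝ) : Fin 3 → ℝ :=
  fun j => if j = i then b i else (b 0 + b 1 + b 2 + b i + b j) / 5

def H : (Fin 3 → ℝ) → AF
  | b, [] => b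
  | b, i :: w => H (A i b) w

def Sp : ℕ → AF → AF
  | 0, U => H (U [])
  | _ + 1, U => fun w => match w with
    | [] => U []
    | i :: w => Sp ‹ℕ› (sh i U) w

lemma sh_H (i b) : sh i (H b) = H (A i b) := rfl
lemma sh_Sp (i m U) : sh i (Sp (m + 1) U) = Sp m (sh i U) := rfl
lemma Sp_nil (m U) : Sp m U [] = U [] := by cases m <;> rfl

lemma Compat.sh {U : AF} (h : Compat U) (i) : Compat (sh i U) :=
  ⟨fun w j => h.1 (i :: w) j, fun w j k => h.2 (i :: w) j k⟩

lemma compat_of {U : AF} (h : ∀ i, Compat (sh i U)) (h1 : ∀ i, U [i] i = U [] i)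
    (h2 : ∀ i j, U [i] j = U [j] i) : Compat U := by
  constructor
  · rintro (_ | ⟨k, w⟩) i
    · exact h1 i
    · exact (h k).1 w i
  · rintro (_ | ⟨k, w⟩) i j
    · exact h2 i j
    · exact (h k).2 w i j

lemma A_self (i b) : A i b i = b i := by simp [A]
lemma A_symm (i j b) : A i b j = A j b i := by
  unfold A
  by_cases h : j = i
  · subst h; rfl
  · rw [if_neg h, if_neg (Ne.symm h)]; ring

lemma compat_H (b) : Compat (H b) := by
  have key : ∀ (w : List (Fin 3)) (b), (∀ i, H b (w ++ [i]) i = H b w i) ∧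
      ∀ i j, H b (w ++ [i]) j = H b (w ++ [j]) i := by
    intro w
    induction w with
    | nil => intro b; exact ⟨fun i => A_self i b, fun i j => A_symm i j b⟩
    | cons k w ih => intro b; exact ih (A k b)
  exact ⟨fun w => (key w b).1, fun w => (key w b).2⟩

lemma compat_Sp (m) : ∀ U, Compat U → Compat (Sp m U) := by
  induction m with
  | zero => intro U _; exact compat_H _
  | succ m ih =>
    intro U hU
    have e : ∀ i, Sp (m + 1) U [i] = U [i] := fun i => Sp_nil m (sh i U)
    apply compat_of
    · intro i; exact ih _ (hU.sh i)
    · intro i; rw [e, Sp_nil]; exact hU.1 [] i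
    · intro i j; rw [e, e]; exact hU.2 [] i j

lemma Compat.sub {U W : AF} (h : Compat U) (h' : Compat W) : Compat (U - W) :=
  ⟨fun w i => by simp [h.1, h'.1], fun w i j => by
    simp only [Pi.sub_apply]; rw [h.2 w i j, h'.2 w i j]⟩

lemma sh_sub (i) (U W : AF) : sh i (U - W) = sh i U - sh i W := rfl

lemma Compat.rep {U : AF} (h : Compat U) (n j) : U (List.replicate n j) j = U [] j := by
  induction n with
  | zero => rfl
  | succ n ih => rw [List.replicate_succ', h.1, ih]

lemma D_nonneg (b) : 0 ≤ D b := by unfold D; positivity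
lemma J_nonneg (n U) : 0 ≤ J n U := by unfold J; positivity
lemma tE_nonneg (n) : ∀ U, 0 ≤ tE n U := by
  induction n with
  | zero => intro U; exact D_nonneg _
  | succ n ih =>
    intro U; unfold tE; have := ih (sh 0 U); have := ih (sh 1 U); have := ih (sh 2 U); positivity
lemma xE_nonneg (n) : ∀ U, 0 ≤ xE n U := by
  induction n with
  | zero => intro U; exact le_rfl
  | succ n ih =>
    intro U; unfold xE; have := ih (sh 0 U); have := ih (sh 1 U); have := ih (sh 2 U)
    have := J_nonneg n U
    split_ifs <;> positivity

lemma D_A (b) : 5 / 3 * (D (A 0 b) + D (A 1 b) + D (A 2 b)) = D b := by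
  simp [D, A]; ring

lemma DB_A {U : AF} (h : Compat U) (b) :
    5 / 3 * (DB (U [0]) (A 0 b) + DB (U [1]) (A 1 b) + DB (U [2]) (A 2 b)) = DB (U []) b := by
  have a0 := h.1 [] 0
  have a1 := h.1 [] 1
  have a2 := h.1 [] 2
  have c0 := h.2 [] 0 1
  have c1 := h.2 [] 0 2
  have c2 := h.2 [] 1 2
  simp only [List.nil_append] at *
  simp [DB, A]
  rw [a0, a1, a2, c0, c1, c2]; ring

lemma tE_sub_H (n) : ∀ U, Compat U → ∀ b,
    tE n (U - H b) = tE n U - 2 * DB (U []) b + D b := by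
  induction n with
  | zero => intro U _ b; simp [tE, H, D, DB]; ring
  | succ n ih =>
    intro U hU b
    simp only [tE, sh_sub, sh_H]
    rw [ih _ (hU.sh 0), ih _ (hU.sh 1), ih _ (hU.sh 2), ← D_A b, ← DB_A hU b]
    simp only [sh]; ring

lemma tE_sub_Sp (m) : ∀ U, Compat U → ∀ k,
    tE (k + m) (U - Sp m U) = tE (k + m) U - tE m U := by
  induction m with
  | zero =>
    intro U hU k
    simp only [Sp, tE]; rw [tE_sub_H _ U hU]; simp [D, DB]; ring
  | succ m ih =>
    intro U hU k
    rw [← add_assoc]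
    simp only [tE, sh_sub, sh_Sp]
    rw [ih _ (hU.sh 0), ih _ (hU.sh 1), ih _ (hU.sh 2)]; ring

lemma tE_mono {U} (hU : Compat U) : Monotone fun n => tE n U := by
  intro m n h
  obtain ⟨k, rfl⟩ := Nat.exists_eq_add_of_le' h
  have := tE_nonneg (k + m) (U - Sp m U)
  rw [tE_sub_Sp m U hU] at this
  simpa using this

lemma tE_H (n) : ∀ b, tE n (H b) = D b := by
  induction n with
  | zero => intro b; rfl
  | succ n ih => intro b; simp only [tE, sh_H, ih, D_A]

/-- corner energies -/
def Cr (j : Fin 3) (b : Fin 3 → ℝ) : ℝ := (b 0 - b j) ^ 2 + (b 1 - b j) ^ 2 + (b 2 - b j) ^ 2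
def B (n : ℕ) (U : AF) : ℝ := Cr 0 (U (List.replicate n 0)) + Cr 1 (U (List.replicate n 1))
  + Cr 2 (U (List.replicate n 2))

lemma Cr_nonneg (j b) : 0 ≤ Cr j b := by unfold Cr; positivity
lemma B_nonneg (n U) : 0 ≤ B n U := by
  have := Cr_nonneg; unfold B
  exact add_nonneg (add_nonneg (this _ _) (this _ _)) (this _ _)

lemma Compat.junc {U : AF} (h : Compat U) (n i j) :
    U (i :: List.replicate n j) j = U (j :: List.replicate n i) i := by
  have h1 := (h.sh i).rep n j
  have h2 := (h.sh j).rep n i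
  simp only [SGaux.sh] at h1 h2
  rw [h1, h2]; exact h.2 [] i j

lemma J_B {U : AF} (h : Compat U) (n) :
    J n U + 2 * B (n + 1) U ≤ 2 * (B n (sh 0 U) + B n (sh 1 U) + B n (sh 2 U)) := by
  have c0 := h.junc n 0 1
  have c1 := h.junc n 0 2
  have c2 := h.junc n 1 2
  simp only [J, B, Cr, sh, List.replicate_succ]
  rw [c0, c1, c2]
  generalize hp0 : U (0 :: List.replicate n 1) = p0
  generalize hp1 : U (1 :: List.replicate n 0) = p1
  generalize hp2 : U (1 :: List.replicate n 2) = p2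
  generalize hp3 : U (2 :: List.replicate n 1) = p3
  generalize hp4 : U (0 :: List.replicate n 2) = p4
  generalize hp5 : U (2 :: List.replicate n 0) = p5
  have k : ∀ a b c : ℝ, (a - b) ^ 2 ≤ 2 * (a - c) ^ 2 + 2 * (b - c) ^ 2 := by
    intro a b c; nlinarith [sq_nonneg (a + b - 2 * c)]
  have k0 := k (p0 2) (p1 2) (p1 0)
  have k1 := k (p2 0) (p3 0) (p3 1)
  have k2 := k (p4 1) (p5 1) (p5 0)
  rw [hp0] at c0; rw [hp1] at c0; rw [hp4] at c1
  linarith [sq_nonneg (p0 0 - p1 0), sq_nonneg (p1 1 - p1 0), sq_nonneg (p2 1 - p3 1),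
    sq_nonneg (p3 2 - p3 1), sq_nonneg (p4 0 - p5 0), sq_nonneg (p5 2 - p5 0),
    sq_nonneg (p0 1 - p1 0), sq_nonneg (p2 2 - p3 1), sq_nonneg (p4 2 - p5 0)]

lemma xE_le (n) : ∀ U, Compat U → xE n U + 2 * ((5 / 3) ^ n * B n U) ≤ 4 * tE n U := by
  induction n with
  | zero => intro U _; simp [xE, B, Cr, tE, D]; nlinarith
  | succ n ih =>
    intro U hU
    have h0 := ih _ (hU.sh 0)
    have h1 := ih _ (hU.sh 1)
    have h2 := ih _ (hU.sh 2)
    have hj := mul_le_mul_of_nonneg_left (J_B hU n) (show (0:ℝ) ≤ (5 / 3) ^ (n + 1) by positivity)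
    have hjn : 0 ≤ (5 / 3 : ℝ) ^ (n + 1) * J n U := mul_nonneg (by positivity) (J_nonneg _ _)
    simp only [xE, tE]
    have : (if n = 0 then 0 else (5 / 3) ^ (n + 1) * J n U) ≤ (5 / 3 : ℝ) ^ (n + 1) * J n U := by
      split_ifs <;> linarith
    rw [pow_succ] at *
    nlinarith

lemma xE_le' (n) {U} (h : Compat U) : xE n U ≤ 4 * tE n U := by
  have := xE_le n U h
  have : 0 ≤ (5 / 3) ^ n * B n U := mul_nonneg (by positivity) (B_nonneg _ _)
  linarith

lemma J_diff (n) (U W : AF) {δ : ℝ} (hδ : 0 < δ) :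
    |J n U - J n W| ≤ δ * J n U + (1 + 1 / δ) * J n (U - W) := by
  have k : ∀ a b c d : ℝ, |(a - b) ^ 2 - (c - d) ^ 2| ≤
      δ * (a - b) ^ 2 + (1 + 1 / δ) * (a - c - (b - d)) ^ 2 := by
    intro a b c d
    have e1 : 2 * (a - b) * (a - c - (b - d)) ≤ δ * (a - b) ^ 2 + 1 / δ * (a - c - (b - d)) ^ 2 := by
      have : 0 ≤ 1 / δ * (δ * (a - b) - (a - c - (b - d))) ^ 2 := by positivity
      have h2 : 1 / δ * (δ * (a - b) - (a - c - (b - d))) ^ 2 = δ * (a - b) ^ 2 +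
        1 / δ * (a - c - (b - d)) ^ 2 - 2 * (a - b) * (a - c - (b - d)) := by field_simp; ring
      linarith
    have e2 : -(2 * (a - b) * (a - c - (b - d))) ≤
        δ * (a - b) ^ 2 + 1 / δ * (a - c - (b - d)) ^ 2 := by
      have : 0 ≤ 1 / δ * (δ * (a - b) + (a - c - (b - d))) ^ 2 := by positivity
      have h2 : 1 / δ * (δ * (a - b) + (a - c - (b - d))) ^ 2 = δ * (a - b) ^ 2 +
        1 / δ * (a - c - (b - d)) ^ 2 + 2 * (a - b) * (a - c - (b - d)) := by field_simp; ring
      linarith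
    have e3 : (a - b) ^ 2 - (c - d) ^ 2 =
      2 * (a - b) * (a - c - (b - d)) - (a - c - (b - d)) ^ 2 := by ring
    rw [e3, abs_le]
    constructor <;> nlinarith [sq_nonneg (a - c - (b - d))]
  simp only [J, Pi.sub_apply]
  rw [abs_le]
  have k0 := abs_le.1 (k (U (0 :: List.replicate n 1) 2) (U (1 :: List.replicate n 0) 2)
    (W (0 :: List.replicate n 1) 2) (W (1 :: List.replicate n 0) 2))
  have k1 := abs_le.1 (k (U (1 :: List.replicate n 2) 0) (U (2 :: List.replicate n 1) 0)
    (W (1 :: List.replicate n 2) 0) (W (2 :: List.replicate n 1) 0))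
  have k2 := abs_le.1 (k (U (0 :: List.replicate n 2) 1) (U (2 :: List.replicate n 0) 1)
    (W (0 :: List.replicate n 2) 1) (W (2 :: List.replicate n 0) 1))
  constructor <;> linarith [k0.1, k0.2, k1.1, k1.2, k2.1, k2.2]

lemma xE_diff {δ : ℝ} (hδ : 0 < δ) (n) : ∀ U W : AF,
    |xE n U - xE n W| ≤ δ * xE n U + (1 + 1 / δ) * xE n (U - W) := by
  induction n with
  | zero => intro U W; simp [xE]
  | succ n ih =>
    intro U W
    have h0 := abs_le.1 (ih (sh 0 U) (sh 0 W))
    have h1 := abs_le.1 (ih (sh 1 U) (sh 1 W))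
    have h2 := abs_le.1 (ih (sh 2 U) (sh 2 W))
    simp only [xE, sh_sub]
    split_ifs
    · rw [abs_le]; constructor <;> linarith [h0.1, h0.2, h1.1, h1.2, h2.1, h2.2]
    · have hj := J_diff n U W hδ
      rw [abs_le] at hj ⊢
      have hp : (0:ℝ) ≤ (5 / 3) ^ (n + 1) := by positivity
      have j1 := mul_le_mul_of_nonneg_left hj.1 hp
      have j2 := mul_le_mul_of_nonneg_left hj.2 hp
      constructor <;> linarith [h0.1, h0.2, h1.1, h1.2, h2.1, h2.2]

/-! harmonic functions near corners -/
lemma H_rep (n) : ∀ b (j k l : Fin 3), j ≠ k → j ≠ l → k ≠ l →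
    H b (List.replicate n j) k = b j + (3 / 5) ^ n * ((b k + b l) / 2 - b j)
      + (1 / 5) ^ n * ((b k - b l) / 2) := by
  induction n with
  | zero => intro b j k l _ _ _; simp [H]; ring
  | succ n ih =>
    intro b j k l h1 h2 h3
    rw [List.replicate_succ]
    simp only [H]
    rw [ih _ j k l h1 h2 h3, A_self]
    have hs : b 0 + b 1 + b 2 = b j + b k + b l := by
      fin_cases j <;> fin_cases k <;> fin_cases l <;> simp at h1 h2 h3 ⊢ <;> ring
    simp only [A, if_neg h1.symm, if_neg h2.symm, hs]
    ring

lemma J_H (n : ℕ) : ∃ d : ℝ, 0 ≤ d ∧ ∀ b, (5 / 3) ^ (n + 1) * J n (H b) = d * D b := by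
  refine ⟨(5 / 3) ^ (n + 1) * (3 / 5 * (3 / 5) ^ n - 2 / 5 * (1 / 5) ^ n) ^ 2, by positivity, ?_⟩
  intro b
  simp only [J, H]
  rw [H_rep n _ 1 2 0 (by decide) (by decide) (by decide),
    H_rep n _ 0 2 1 (by decide) (by decide) (by decide),
    H_rep n _ 2 0 1 (by decide) (by decide) (by decide),
    H_rep n _ 1 0 2 (by decide) (by decide) (by decide),
    H_rep n _ 2 1 0 (by decide) (by decide) (by decide),
    H_rep n _ 0 1 2 (by decide) (by decide) (by decide)]
  simp [A, D]
  ring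

lemma xE_H (n : ℕ) : ∃ c : ℝ, ∀ b, xE n (H b) = c * D b := by
  induction n with
  | zero => exact ⟨0, fun b => by simp [xE]⟩
  | succ n ih =>
    obtain ⟨c, hc⟩ := ih
    obtain ⟨d, _, hd⟩ := J_H n
    refine ⟨c + if n = 0 then 0 else d, fun b => ?_⟩
    simp only [xE, sh_H, hc, hd]
    rw [← D_A b]
    split_ifs <;> ring

lemma xE_H_mono (n : ℕ) (b) : xE n (H b) ≤ xE (n + 1) (H b) := by
  obtain ⟨c, hc⟩ := xE_H n
  have := J_nonneg n (H b)
  simp only [xE, sh_H, hc]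
  have h : 5 / 3 * (c * D (A 0 b) + c * D (A 1 b) + c * D (A 2 b)) = c * D b := by
    rw [← D_A b]; ring
  rw [h]
  split_ifs
  · simp
  · have : (0:ℝ) ≤ (5 / 3) ^ (n + 1) * J n (H b) := by positivity
    linarith

lemma xE_H_conv (b) : ∃ L, Tendsto (fun n => xE n (H b)) atTop (𝓝 L) := by
  refine ⟨_, tendsto_atTop_ciSup (monotone_nat_of_le_succ fun n => xE_H_mono n b) ⟨4 * D b, ?_⟩⟩
  rintro _ ⟨n, rfl⟩
  have := xE_le' n (compat_H b)
  rwa [tE_H] at this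

/-- decay at corners -/
lemma H_decay (b) (j k : Fin 3) :
    Tendsto (fun n : ℕ => (5 / 3 : ℝ) ^ n * (H b (List.replicate n j) k - b j) ^ 2) atTop (𝓝 0) := by
  by_cases hjk : j = k
  · subst hjk
    have : ∀ n, H b (List.replicate n j) j = b j := fun n => (compat_H b).rep n j
    simp [this]
  obtain ⟨l, h1, h2⟩ : ∃ l : Fin 3, j ≠ l ∧ k ≠ l := by
    revert j k; decide
  have e : (fun n : ℕ => (5 / 3 : ℝ) ^ n * (H b (List.replicate n j) k - b j) ^ 2) =
      fun n : ℕ => (3 / 5 : ℝ) ^ n * (((b k + b l) / 2 - b j)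
      + (1 / 3) ^ n * ((b k - b l) / 2)) ^ 2 := by
    funext n
    rw [H_rep n b j k l hjk h1 h2]
    have e1 : (1 / 5 : ℝ) ^ n = (3 / 5) ^ n * (1 / 3) ^ n := by rw [← mul_pow]; norm_num
    have e2 : (5 / 3 : ℝ) ^ n * (3 / 5) ^ n = 1 := by rw [← mul_pow]; norm_num
    rw [e1]
    linear_combination ((3 / 5 : ℝ) ^ n * (((b k + b l) / 2 - b j)
      + (1 / 3) ^ n * ((b k - b l) / 2)) ^ 2) * e2
  rw [e]
  have t1 := tendsto_pow_atTop_nhds_zero_of_lt_one (r := (3 / 5 : ℝ)) (by norm_num) (by norm_num)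
  have t2 := tendsto_pow_atTop_nhds_zero_of_lt_one (r := (1 / 3 : ℝ)) (by norm_num) (by norm_num)
  have := t1.mul (((t2.mul_const ((b k - b l) / 2)).const_add ((b k + b l) / 2 - b j)).pow 2)
  simpa using this

lemma Sp_decay (m) : ∀ U, Compat U → ∀ j k : Fin 3,
    Tendsto (fun n : ℕ => (5 / 3 : ℝ) ^ n * (Sp m U (List.replicate n j) k - U [] j) ^ 2)
      atTop (𝓝 0) := by
  induction m with
  | zero => intro U _ j k; exact H_decay (U []) j k
  | succ m ih =>
    intro U hU j k
    rw [← tendsto_add_atTop_iff_nat 1]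
    have := (ih _ (hU.sh j) j k).const_mul (5 / 3)
    rw [mul_zero] at this
    refine this.congr fun n => ?_
    have e : sh j U [] j = U [] j := hU.1 [] j
    rw [e, List.replicate_succ, pow_succ]
    simp only [Sp]; ring

lemma J_Sp_decay (m) {U} (hU : Compat U) :
    Tendsto (fun n : ℕ => (5 / 3 : ℝ) ^ (n + 1) * J n (Sp (m + 1) U)) atTop (𝓝 0) := by
  have g : ∀ i j k : Fin 3, Tendsto (fun n : ℕ => (5 / 3 : ℝ) ^ (n + 1) *
      (Sp (m + 1) U (i :: List.replicate n j) k - Sp (m + 1) U (j :: List.replicate n i) k) ^ 2)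
      atTop (𝓝 0) := by
    intro i j k
    have a := ((Sp_decay m _ (hU.sh i) j k).add (Sp_decay m _ (hU.sh j) i k)).const_mul (10 / 3)
    rw [add_zero, mul_zero] at a
    refine squeeze_zero (fun n => by positivity) (fun n => ?_) a
    have e : sh i U [] j = sh j U [] i := hU.2 [] i j
    rw [e]
    simp only [Sp, pow_succ]
    generalize Sp m (sh i U) (List.replicate n j) k = p
    generalize Sp m (sh j U) (List.replicate n i) k = q
    generalize sh j U [] i = c
    have : (p - q) ^ 2 ≤ 2 * (p - c) ^ 2 + 2 * (q - c) ^ 2 := by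
      nlinarith [sq_nonneg (p + q - 2 * c)]
    have h := mul_le_mul_of_nonneg_left this (show (0:ℝ) ≤ (5 / 3) ^ n by positivity)
    linarith
  have := ((g 0 1 2).add (g 1 2 0)).add (g 0 2 1)
  simp only [add_zero] at this
  refine this.congr fun n => ?_
  simp only [J]; ring

lemma xE_Sp_conv (m) : ∀ U, Compat U → ∃ L, Tendsto (fun n => xE n (Sp m U)) atTop (𝓝 L) := by
  induction m with
  | zero => intro U _; exact xE_H_conv _
  | succ m ih =>
    intro U hU
    obtain ⟨L0, h0⟩ := ih _ (hU.sh 0)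
    obtain ⟨L1, h1⟩ := ih _ (hU.sh 1)
    obtain ⟨L2, h2⟩ := ih _ (hU.sh 2)
    refine ⟨5 / 3 * (L0 + L1 + L2) + 0, ?_⟩
    rw [← tendsto_add_atTop_iff_nat 1]
    refine (((h0.add h1).add h2).const_mul (5 / 3)).add (J_Sp_decay m hU) |>.congr' ?_
    filter_upwards [eventually_ne_atTop 0] with n hn
    simp only [xE, sh_Sp, if_neg hn]

lemma xE_conv {U} (hU : Compat U) (hb : BddAbove (Set.range fun n => tE n U)) :
    ∃ L, Tendsto (fun n => xE n U) atTop (𝓝 L) := by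
  apply cauchySeq_tendsto_of_complete
  have hT := tendsto_atTop_ciSup (tE_mono hU) hb
  set T := ⨆ n, tE n U
  have hle : ∀ n, tE n U ≤ T := fun n => le_ciSup hb n
  have hT0 : 0 ≤ T := (tE_nonneg 0 U).trans (hle 0)
  rw [Metric.cauchySeq_iff']
  intro ε hε
  set δ : ℝ := ε / (12 * (4 * T + 1)) with hδd
  have hδ : 0 < δ := by positivity
  have hδT : δ * (4 * T) ≤ ε / 12 := by
    have : δ * (4 * T + 1) = ε / 12 := by rw [hδd]; field_simp
    nlinarith
  set K : ℝ := (1 + 1 / δ) * 4 with hK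
  have hK0 : 0 < K := by positivity
  obtain ⟨m, hm⟩ : ∃ m, T - ε / (12 * K) < tE m U :=
    (hT.eventually (lt_mem_nhds (show T - ε / (12 * K) < T by
      have : 0 < ε / (12 * K) := by positivity
      linarith))).exists
  have hd : ∀ n, m ≤ n → |xE n U - xE n (Sp m U)| ≤ ε / 6 := by
    intro n hn
    obtain ⟨k, rfl⟩ := Nat.exists_eq_add_of_le' hn
    have a := xE_diff hδ (k + m) U (Sp m U)
    have b := xE_le' (k + m) (hU.sub (compat_Sp m U hU))
    rw [tE_sub_Sp m U hU] at b
    have c := xE_le' (k + m) hU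
    have h1 : δ * xE (k + m) U ≤ δ * (4 * T) :=
      mul_le_mul_of_nonneg_left (by linarith [hle (k + m)]) hδ.le
    have h2 : (1 + 1 / δ) * xE (k + m) (U - Sp m U) ≤ (1 + 1 / δ) * (4 * (ε / (12 * K))) :=
      mul_le_mul_of_nonneg_left (by linarith [hle (k + m)]) (by positivity)
    have h3 : (1 + 1 / δ) * (4 * (ε / (12 * K))) = ε / 12 := by
      rw [← mul_assoc, ← hK]; field_simp
    linarith
  obtain ⟨L, hL⟩ := xE_Sp_conv m U hU
  obtain ⟨N, hN⟩ := Metric.cauchySeq_iff'.1 hL.cauchySeq (ε / 6) (by positivity)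
  have hN2 : ∀ n, max N m ≤ n → |xE n (Sp m U) - xE N (Sp m U)| < ε / 6 := fun n hn => by
    have := hN n (le_trans (le_max_left _ _) hn)
    rwa [Real.dist_eq] at this
  refine ⟨max N m, fun n hn => ?_⟩
  rw [Real.dist_eq]
  have q1 := abs_le.1 (hd n (le_trans (le_max_right _ _) hn))
  have q2 := abs_le.1 (hd (max N m) (le_max_right _ _))
  have q3 := abs_lt.1 (hN2 n hn)
  have q4 := abs_lt.1 (hN2 (max N m) le_rfl)
  rw [abs_lt]
  constructor <;> linarith [q1.1, q1.2, q2.1, q2.2, q3.1, q3.2, q4.1, q4.2]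

lemma tot_conv {U} (hU : Compat U) (hb : BddAbove (Set.range fun n => tE n U + xE n U)) :
    ∃ L, Tendsto (fun n => tE n U + xE n U) atTop (𝓝 L) := by
  have hb' : BddAbove (Set.range fun n => tE n U) := by
    obtain ⟨M, hM⟩ := hb
    refine ⟨M, ?_⟩
    rintro _ ⟨n, rfl⟩
    have h1 : tE n U + xE n U ≤ M := hM ⟨n, rfl⟩
    have := xE_nonneg n U
    show tE n U ≤ M
    linarith
  obtain ⟨L, hL⟩ := xE_conv hU hb'
  exact ⟨_, (tendsto_atTop_ciSup (tE_mono hU) hb').add hL⟩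

end SGaux

namespace SGaux

def ev : Fin 3 → ℤ × ℤ := ![(0, 0), (1, 0), (0, 1)]

/-- the shift `2^n e_i` -/
def cs (n : ℕ) (i : Fin 3) : ℤ × ℤ := ((2 : ℤ) ^ n * (ev i).1, (2 : ℤ) ^ n * (ev i).2)

def W : ℕ → Finset (ℤ × ℤ)
  | 0 => {ev 0, ev 1, ev 2}
  | n + 1 => (W n).image (· + cs n 0) ∪ (W n).image (· + cs n 1) ∪ (W n).image (· + cs n 2)

def nb (x y : ℤ × ℤ) : Prop :=
  (y.1 = x.1 + 1 ∧ y.2 = x.2) ∨ (y.1 = x.1 - 1 ∧ y.2 = x.2) ∨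
  (y.1 = x.1 ∧ y.2 = x.2 + 1) ∨ (y.1 = x.1 ∧ y.2 = x.2 - 1) ∨
  (y.1 = x.1 + 1 ∧ y.2 = x.2 - 1) ∨ (y.1 = x.1 - 1 ∧ y.2 = x.2 + 1)

instance (x y) : Decidable (nb x y) := by unfold nb; infer_instance

def P (n : ℕ) : Finset ((ℤ × ℤ) × (ℤ × ℤ)) := (W n ×ˢ W n).filter fun p => nb p.1 p.2

def ph (n : ℕ) (z : ℤ × ℤ) : Pt := ((2 : ℝ) ^ n)⁻¹ • ((z.1 : ℝ) • ptA 1 + (z.2 : ℝ) • ptA 2)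

lemma ptA_00 : ptA 0 0 = 0 := rfl
lemma ptA_01 : ptA 0 1 = 0 := rfl
lemma ptA_10 : ptA 1 0 = 1 := rfl
lemma ptA_11 : ptA 1 1 = 0 := rfl
lemma ptA_20 : ptA 2 0 = 1 / 2 := rfl
lemma ptA_21 : ptA 2 1 = Real.sqrt 3 / 2 := rfl

lemma ph0 (n z) : ph n z 0 = ((2 : ℝ) ^ n)⁻¹ * (z.1 + z.2 / 2) := by
  simp [ph, ptA_10, ptA_20]; ring
lemma ph1 (n z) : ph n z 1 = ((2 : ℝ) ^ n)⁻¹ * (z.2 * (Real.sqrt 3 / 2)) := by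
  simp [ph, ptA_11, ptA_21]

lemma ph_norm (n x y) : ‖ph n x - ph n y‖ ^ 2 = (((2 : ℝ) ^ n)⁻¹) ^ 2 *
    (((y.1 - x.1) ^ 2 + (y.1 - x.1) * (y.2 - x.2) + (y.2 - x.2) ^ 2 : ℤ) : ℝ) := by
  rw [EuclideanSpace.norm_sq_eq, Fin.sum_univ_two]
  simp only [PiLp.sub_apply, ph0, ph1, Real.norm_eq_abs, sq_abs]
  have := Real.sq_sqrt (show (0:ℝ) ≤ 3 by norm_num)
  push_cast
  linear_combination ((((2 : ℝ) ^ n)⁻¹) ^ 2 * (x.2 - y.2) ^ 2 / 4) * this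

lemma nb_iff (x y : ℤ × ℤ) :
    nb x y ↔ (y.1 - x.1) ^ 2 + (y.1 - x.1) * (y.2 - x.2) + (y.2 - x.2) ^ 2 = 1 := by
  constructor
  · rintro (⟨h, h'⟩ | ⟨h, h'⟩ | ⟨h, h'⟩ | ⟨h, h'⟩ | ⟨h, h'⟩ | ⟨h, h'⟩) <;> rw [h, h'] <;> ring
  · intro h
    unfold nb
    generalize hp : y.1 - x.1 = p at h
    generalize hq : y.2 - x.2 = q at h
    have h1 : p ≤ 1 := by nlinarith [sq_nonneg (p + 2 * q)]
    have h2 : -1 ≤ p := by nlinarith [sq_nonneg (p + 2 * q)]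
    have h3 : q ≤ 1 := by nlinarith [sq_nonneg (q + 2 * p)]
    have h4 : -1 ≤ q := by nlinarith [sq_nonneg (q + 2 * p)]
    interval_cases p <;> interval_cases q <;> omega

lemma isEdge_ph (n x y) : isEdge n (ph n x) (ph n y) ↔ nb x y := by
  rw [nb_iff, isEdge, zpow_neg, zpow_natCast]
  have hp : (0:ℝ) < ((2 : ℝ) ^ n)⁻¹ := by positivity
  rw [← sq_eq_sq₀ (norm_nonneg _) hp.le, ph_norm]
  constructor
  · intro h
    have : (((y.1 - x.1) ^ 2 + (y.1 - x.1) * (y.2 - x.2) + (y.2 - x.2) ^ 2 : ℤ) : ℝ) = 1 := by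
      have h2 : (((2 : ℝ) ^ n)⁻¹) ^ 2 ≠ 0 := by positivity
      exact mul_left_cancel₀ h2 (by rw [h, mul_one])
    exact_mod_cast this
  · intro h; rw [h]; simp

lemma ph_inj (n) : Function.Injective (ph n) := by
  intro x y h
  have h0 : ph n x 0 = ph n y 0 := by rw [h]
  have h1 : ph n x 1 = ph n y 1 := by rw [h]
  rw [ph0, ph0] at h0
  rw [ph1, ph1] at h1
  have hp : ((2 : ℝ) ^ n)⁻¹ ≠ 0 := by positivity
  have hs : Real.sqrt 3 / 2 ≠ 0 := by positivity
  have e1 := mul_right_cancel₀ hs (mul_left_cancel₀ hp h1)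
  have e0 := mul_left_cancel₀ hp h0
  rw [e1] at e0
  have e2 := add_right_cancel e0
  exact Prod.ext (by exact_mod_cast e2) (by exact_mod_cast e1)

lemma ptA_ph (i) : ptA i = ph 0 (ev i) := by
  ext k
  fin_cases k
  · show ptA i 0 = ph 0 (ev i) 0
    rw [ph0]; fin_cases i <;> simp [ev, ptA_00, ptA_10, ptA_20]
  · show ptA i 1 = ph 0 (ev i) 1
    rw [ph1]; fin_cases i <;> simp [ev, ptA_01, ptA_11, ptA_21]

lemma sgMap_ph (n i z) : sgMap i (ph n z) = ph (n + 1) (z + cs n i) := by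
  have hp : ((2 : ℝ) ^ n) ≠ 0 := by positivity
  have c0 : ptA i 0 = (ev i).1 + (ev i).2 / 2 := by rw [ptA_ph, ph0]; simp
  have c1 : ptA i 1 = (ev i).2 * (Real.sqrt 3 / 2) := by rw [ptA_ph, ph1]; simp
  ext k
  fin_cases k
  · show (2:ℝ)⁻¹ * (ph n z 0 + ptA i 0) = ph (n + 1) (z + cs n i) 0
    rw [ph0, ph0, c0]; simp only [cs, Prod.fst_add, Prod.snd_add]; push_cast; field_simp; ring
  · show (2:ℝ)⁻¹ * (ph n z 1 + ptA i 1) = ph (n + 1) (z + cs n i) 1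
    rw [ph1, ph1, c1]; simp only [cs, Prod.snd_add]; push_cast; field_simp; ring

lemma Vn_eq (n) : Vn n = (W n).image (ph n) := by
  induction n with
  | zero => simp [Vn, W, ptA_ph, Finset.image_insert]
  | succ n ih =>
    have e : ∀ i, sgMap i ∘ ph n = ph (n + 1) ∘ (· + cs n i) := fun i =>
      funext fun z => sgMap_ph n i z
    simp only [Vn, W, ih, Finset.image_union, Finset.image_image, e]

lemma mem_W_succ (n x) : x ∈ W (n + 1) ↔
    x - cs n 0 ∈ W n ∨ x - cs n 1 ∈ W n ∨ x - cs n 2 ∈ W n := by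
  have : ∀ i, x ∈ (W n).image (· + cs n i) ↔ x - cs n i ∈ W n := by
    intro i
    rw [Finset.mem_image]
    constructor
    · rintro ⟨a, ha, rfl⟩; simpa using ha
    · intro h; exact ⟨_, h, by simp⟩
  simp only [W, Finset.mem_union, this, or_assoc]

lemma mem_W_succ' (n a b) : ((a, b) : ℤ × ℤ) ∈ W (n + 1) ↔
    (a, b) ∈ W n ∨ (a - 2 ^ n, b) ∈ W n ∨ (a, b - 2 ^ n) ∈ W n := by
  rw [mem_W_succ]; simp [cs, ev]

lemma W_bd (n) : ∀ a b : ℤ, (a, b) ∈ W n → 0 ≤ a ∧ 0 ≤ b ∧ a + b ≤ 2 ^ n := by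
  induction n with
  | zero =>
    intro a b h
    simp [W, ev] at h
    norm_num; omega
  | succ n ih =>
    intro a b h
    rw [mem_W_succ'] at h
    have hp : (0:ℤ) < 2 ^ n := by positivity
    rw [pow_succ]
    rcases h with h | h | h <;> have := ih _ _ h <;> omega

/-- vertex `k` of the corner cell `j` -/
def cv (n : ℕ) (j k : Fin 3) : ℤ × ℤ :=
  (((2 : ℤ) ^ n - 1) * (ev j).1 + (ev k).1, ((2 : ℤ) ^ n - 1) * (ev j).2 + (ev k).2)

lemma cv_succ (n j k) : cv (n + 1) j k = cv n j k + cs n j := by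
  ext <;> simp [cv, cs] <;> ring

lemma cv_mem (n j k) : cv n j k ∈ W n := by
  induction n with
  | zero => revert j k; decide
  | succ n ih =>
    rw [mem_W_succ, cv_succ]
    have h : cv n j k + cs n j - cs n j ∈ W n := by simpa using ih
    fin_cases j
    · exact Or.inl h
    · exact Or.inr (Or.inl h)
    · exact Or.inr (Or.inr h)

def cellP (n : ℕ) (i : Fin 3) : Finset ((ℤ × ℤ) × (ℤ × ℤ)) :=
  (P n).image fun p => (p.1 + cs n i, p.2 + cs n i)

def Ex (n : ℕ) : Finset ((ℤ × ℤ) × (ℤ × ℤ)) :=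
  {((2 ^ n - 1, 1), (2 ^ n, 1)), ((2 ^ n, 1), (2 ^ n - 1, 1)),
   ((2 ^ n, 2 ^ n - 1), (2 ^ n - 1, 2 ^ n)), ((2 ^ n - 1, 2 ^ n), (2 ^ n, 2 ^ n - 1)),
   ((1, 2 ^ n - 1), (1, 2 ^ n)), ((1, 2 ^ n), (1, 2 ^ n - 1))}

lemma mem_P (n x y) : (x, y) ∈ P n ↔ x ∈ W n ∧ y ∈ W n ∧ nb x y := by
  simp [P, and_assoc]

lemma mem_cellP (n i x y) : (x, y) ∈ cellP n i ↔ x - cs n i ∈ W n ∧ y - cs n i ∈ W n ∧ nb x y := by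
  unfold cellP
  rw [Finset.mem_image]
  constructor
  · rintro ⟨⟨a, b⟩, h, e⟩
    rw [mem_P] at h
    simp only [Prod.mk.injEq] at e
    obtain ⟨rfl, rfl⟩ := e
    refine ⟨by simpa using h.1, by simpa using h.2.1, ?_⟩
    have := h.2.2
    simp only [nb, Prod.fst_add, Prod.snd_add] at this ⊢
    omega
  · rintro ⟨h1, h2, h3⟩
    refine ⟨(x - cs n i, y - cs n i), ?_, by simp⟩
    rw [mem_P]
    refine ⟨h1, h2, ?_⟩
    simp only [nb, Prod.fst_sub, Prod.snd_sub] at h3 ⊢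
    omega

lemma mem_cell0 (n a b c d) : (((a, b), (c, d)) : (ℤ × ℤ) × (ℤ × ℤ)) ∈ cellP n 0 ↔
    (a, b) ∈ W n ∧ (c, d) ∈ W n ∧ nb (a, b) (c, d) := by
  rw [mem_cellP]; simp [cs, ev]
lemma mem_cell1 (n a b c d) : (((a, b), (c, d)) : (ℤ × ℤ) × (ℤ × ℤ)) ∈ cellP n 1 ↔
    (a - 2 ^ n, b) ∈ W n ∧ (c - 2 ^ n, d) ∈ W n ∧ nb (a, b) (c, d) := by
  rw [mem_cellP]; simp [cs, ev]
lemma mem_cell2 (n a b c d) : (((a, b), (c, d)) : (ℤ × ℤ) × (ℤ × ℤ)) ∈ cellP n 2 ↔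
    (a, b - 2 ^ n) ∈ W n ∧ (c, d - 2 ^ n) ∈ W n ∧ nb (a, b) (c, d) := by
  rw [mem_cellP]; simp [cs, ev]

lemma corners (n) : ((0, 0) : ℤ × ℤ) ∈ W n ∧ (2 ^ n, 0) ∈ W n ∧ (0, 2 ^ n) ∈ W n := by
  have h0 := cv_mem n 0 0
  have h1 := cv_mem n 1 1
  have h2 := cv_mem n 2 2
  simp [cv, ev] at h0 h1 h2
  exact ⟨h0, h1, h2⟩

lemma nearc (n) : ((1, 0) : ℤ × ℤ) ∈ W n ∧ (0, 1) ∈ W n ∧ (2 ^ n - 1, 0) ∈ W n ∧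
    (2 ^ n - 1, 1) ∈ W n ∧ (0, 2 ^ n - 1) ∈ W n ∧ (1, 2 ^ n - 1) ∈ W n := by
  have h0 := cv_mem n 0 1
  have h1 := cv_mem n 0 2
  have h2 := cv_mem n 1 0
  have h3 := cv_mem n 1 2
  have h4 := cv_mem n 2 0
  have h5 := cv_mem n 2 1
  simp [cv, ev] at h0 h1 h2 h3 h4 h5
  exact ⟨h0, h1, h2, h3, h4, h5⟩

lemma P_zero : P 1 = cellP 0 0 ∪ cellP 0 1 ∪ cellP 0 2 := by decide

set_option maxHeartbeats 4000000 in
/-- The key combinatorial decomposition. -/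
lemma P_succ (n) (hn : n ≠ 0) : P (n + 1) = cellP n 0 ∪ cellP n 1 ∪ cellP n 2 ∪ Ex n := by
  have hN : (2:ℤ) ≤ 2 ^ n := by
    calc (2:ℤ) = 2 ^ 1 := by norm_num
      _ ≤ 2 ^ n := pow_le_pow_right₀ (by norm_num) (by omega)
  obtain ⟨k0, k1, k2⟩ := corners n
  obtain ⟨l0, l1, l2, l3, l4, l5⟩ := nearc n
  have bd := W_bd n
  ext ⟨⟨a, b⟩, ⟨c, d⟩⟩
  simp only [Finset.mem_union, mem_cell0, mem_cell1, mem_cell2, mem_P, mem_W_succ', Ex,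
    Finset.mem_insert, Finset.mem_singleton, Prod.mk.injEq, nb]
  generalize (2:ℤ) ^ n = N at *
  constructor
  · rintro ⟨h1, h2, h3⟩
    have L : ∀ a b c d : ℤ, a = c → b = d → (a, b) ∈ W n → (c, d) ∈ W n := by
      rintro a b _ _ rfl rfl h; exact h
    rcases h1 with h1 | h1 | h1 <;> rcases h2 with h2 | h2 | h2
    · exact Or.inl (Or.inl (Or.inl ⟨h1, h2, h3⟩))
    · have b1 := bd _ _ h1
      have b2 := bd _ _ h2
      by_cases e1 : a = N ∧ b = 0
      · exact Or.inl (Or.inl (Or.inr ⟨L _ _ _ _ (by omega) (by omega) k0, h2, h3⟩))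
      by_cases e2 : c = N ∧ d = 0
      · exact Or.inl (Or.inl (Or.inl ⟨h1, L _ _ _ _ (by omega) (by omega) k1, h3⟩))
      obtain ⟨q1, q2, q3, q4⟩ : a = N - 1 ∧ b = 1 ∧ c = N ∧ d = 1 := by
        clear L
        rcases h3 with h3 | h3 | h3 | h3 | h3 | h3 <;> omega
      right; simp only [q1, q2, q3, q4, and_self, true_or, or_true]
    · have b1 := bd _ _ h1
      have b2 := bd _ _ h2
      by_cases e1 : a = 0 ∧ b = N
      · exact Or.inl (Or.inr ⟨L _ _ _ _ (by omega) (by omega) k0, h2, h3⟩)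
      by_cases e2 : c = 0 ∧ d = N
      · exact Or.inl (Or.inl (Or.inl ⟨h1, L _ _ _ _ (by omega) (by omega) k2, h3⟩))
      obtain ⟨q1, q2, q3, q4⟩ : a = 1 ∧ b = N - 1 ∧ c = 1 ∧ d = N := by
        clear L
        rcases h3 with h3 | h3 | h3 | h3 | h3 | h3 <;> omega
      right; simp only [q1, q2, q3, q4, and_self, true_or, or_true]
    · have b1 := bd _ _ h1
      have b2 := bd _ _ h2
      by_cases e1 : a = N ∧ b = 0
      · exact Or.inl (Or.inl (Or.inl ⟨L _ _ _ _ (by omega) (by omega) k1, h2, h3⟩))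
      by_cases e2 : c = N ∧ d = 0
      · exact Or.inl (Or.inl (Or.inr ⟨h1, L _ _ _ _ (by omega) (by omega) k0, h3⟩))
      obtain ⟨q1, q2, q3, q4⟩ : a = N ∧ b = 1 ∧ c = N - 1 ∧ d = 1 := by
        clear L
        rcases h3 with h3 | h3 | h3 | h3 | h3 | h3 <;> omega
      right; simp only [q1, q2, q3, q4, and_self, true_or, or_true]
    · exact Or.inl (Or.inl (Or.inr ⟨h1, h2, h3⟩))
    · have b1 := bd _ _ h1
      have b2 := bd _ _ h2
      by_cases e1 : a = N ∧ b = N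
      · exact Or.inl (Or.inr ⟨L _ _ _ _ (by omega) (by omega) k1, h2, h3⟩)
      by_cases e2 : c = N ∧ d = N
      · exact Or.inl (Or.inl (Or.inr ⟨h1, L _ _ _ _ (by omega) (by omega) k2, h3⟩))
      obtain ⟨q1, q2, q3, q4⟩ : a = N ∧ b = N - 1 ∧ c = N - 1 ∧ d = N := by
        clear L
        rcases h3 with h3 | h3 | h3 | h3 | h3 | h3 <;> omega
      right; simp only [q1, q2, q3, q4, and_self, true_or, or_true]
    · have b1 := bd _ _ h1
      have b2 := bd _ _ h2
      by_cases e1 : a = 0 ∧ b = N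
      · exact Or.inl (Or.inl (Or.inl ⟨L _ _ _ _ (by omega) (by omega) k2, h2, h3⟩))
      by_cases e2 : c = 0 ∧ d = N
      · exact Or.inl (Or.inr ⟨h1, L _ _ _ _ (by omega) (by omega) k0, h3⟩)
      obtain ⟨q1, q2, q3, q4⟩ : a = 1 ∧ b = N ∧ c = 1 ∧ d = N - 1 := by
        clear L
        rcases h3 with h3 | h3 | h3 | h3 | h3 | h3 <;> omega
      right; simp only [q1, q2, q3, q4, and_self, true_or, or_true]
    · have b1 := bd _ _ h1
      have b2 := bd _ _ h2
      by_cases e1 : a = N ∧ b = N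
      · exact Or.inl (Or.inl (Or.inr ⟨L _ _ _ _ (by omega) (by omega) k2, h2, h3⟩))
      by_cases e2 : c = N ∧ d = N
      · exact Or.inl (Or.inr ⟨h1, L _ _ _ _ (by omega) (by omega) k1, h3⟩)
      obtain ⟨q1, q2, q3, q4⟩ : a = N - 1 ∧ b = N ∧ c = N ∧ d = N - 1 := by
        clear L
        rcases h3 with h3 | h3 | h3 | h3 | h3 | h3 <;> omega
      right; simp only [q1, q2, q3, q4, and_self, true_or, or_true]
    · exact Or.inl (Or.inr ⟨h1, h2, h3⟩)
  · rintro (((⟨h1, h2, h3⟩ | ⟨h1, h2, h3⟩) | ⟨h1, h2, h3⟩) | h)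
    · exact ⟨Or.inl h1, Or.inl h2, h3⟩
    · exact ⟨Or.inr (Or.inl h1), Or.inr (Or.inl h2), h3⟩
    · exact ⟨Or.inr (Or.inr h1), Or.inr (Or.inr h2), h3⟩
    · rcases h with h | h | h | h | h | h <;> obtain ⟨⟨rfl, rfl⟩, rfl, rfl⟩ := h <;>
        refine ⟨?_, ?_, by omega⟩ <;>
        simp only [sub_self, l0, l1, l2, l3, l4, l5, true_or, or_true]

lemma disj01 (n) : Disjoint (cellP n 0) (cellP n 1) := by
  rw [Finset.disjoint_left]
  rintro ⟨⟨a, b⟩, ⟨c, d⟩⟩ h h'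
  rw [mem_cell0] at h
  rw [mem_cell1] at h'
  have := W_bd n _ _ h.1; have := W_bd n _ _ h.2.1
  have := W_bd n _ _ h'.1; have := W_bd n _ _ h'.2.1
  have := h.2.2
  simp only [nb] at this
  omega

lemma disj02 (n) : Disjoint (cellP n 0 ∪ cellP n 1) (cellP n 2) := by
  rw [Finset.disjoint_left]
  rintro ⟨⟨a, b⟩, ⟨c, d⟩⟩ h h'
  rw [Finset.mem_union, mem_cell0, mem_cell1] at h
  rw [mem_cell2] at h'
  have := W_bd n _ _ h'.1; have := W_bd n _ _ h'.2.1
  have := h'.2.2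
  simp only [nb] at this
  rcases h with h | h <;> have := W_bd n _ _ h.1 <;> have := W_bd n _ _ h.2.1 <;> omega

lemma disjEx (n) (hn : n ≠ 0) : Disjoint (cellP n 0 ∪ cellP n 1 ∪ cellP n 2) (Ex n) := by
  have hN : (2:ℤ) ≤ 2 ^ n := by
    calc (2:ℤ) = 2 ^ 1 := by norm_num
      _ ≤ 2 ^ n := pow_le_pow_right₀ (by norm_num) (by omega)
  rw [Finset.disjoint_left]
  rintro ⟨⟨a, b⟩, ⟨c, d⟩⟩ h h'
  rw [Finset.mem_union, Finset.mem_union, mem_cell0, mem_cell1, mem_cell2] at h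
  simp only [Ex, Finset.mem_insert, Finset.mem_singleton, Prod.mk.injEq] at h'
  rcases h with (h | h) | h <;> have := W_bd n _ _ h.1 <;> have := W_bd n _ _ h.2.1 <;> omega

lemma sum_Ex (n) (hn : n ≠ 0) (g : ℤ × ℤ → ℝ) : ∑ p ∈ Ex n, (g p.2 - g p.1) ^ 2 =
    2 * ((g (2 ^ n - 1, 1) - g (2 ^ n, 1)) ^ 2 + (g (2 ^ n, 2 ^ n - 1) - g (2 ^ n - 1, 2 ^ n)) ^ 2
      + (g (1, 2 ^ n - 1) - g (1, 2 ^ n)) ^ 2) := by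
  have hN : (2:ℤ) ≤ 2 ^ n := by
    calc (2:ℤ) = 2 ^ 1 := by norm_num
      _ ≤ 2 ^ n := pow_le_pow_right₀ (by norm_num) (by omega)
  unfold Ex
  generalize (2:ℤ) ^ n = N at *
  have m : ∀ {p} {s : Finset ((ℤ × ℤ) × (ℤ × ℤ))}, p ∉ s →
    ∑ p ∈ insert p s, (g p.2 - g p.1) ^ 2 = (g p.2 - g p.1) ^ 2 + ∑ p ∈ s, (g p.2 - g p.1) ^ 2 :=
    fun h => Finset.sum_insert h
  rw [m, m, m, m, m, Finset.sum_singleton]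
  · ring
  all_goals
    simp only [Finset.mem_insert, Finset.mem_singleton, Prod.mk.injEq]
    omega

lemma sum_cell (n i) (g : ℤ × ℤ → ℝ) : ∑ p ∈ cellP n i, (g p.2 - g p.1) ^ 2 =
    ∑ p ∈ P n, (g (p.2 + cs n i) - g (p.1 + cs n i)) ^ 2 := by
  unfold cellP
  rw [Finset.sum_image]
  rintro ⟨a, b⟩ _ ⟨c, d⟩ _ h
  simpa using h

def addr : List (Fin 3) → Pt → Pt
  | [], z => z
  | i :: w, z => sgMap i (addr w z)

def Uof (u : Pt → ℝ) : AF := fun w i => u (addr w (ptA i))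

lemma sh_Uof (u i) : sh i (Uof u) = Uof (u ∘ sgMap i) := rfl

lemma addr_append (w i z) : addr (w ++ [i]) z = addr w (sgMap i z) := by
  induction w with
  | nil => rfl
  | cons j w ih => simp [addr, ih]

lemma sgMap_self (i) : sgMap i (ptA i) = ptA i := by
  unfold sgMap; rw [← two_smul ℝ, smul_smul]; norm_num

lemma compat_Uof (u) : Compat (Uof u) := by
  constructor
  · intro w i; simp only [Uof, addr_append, sgMap_self]
  · intro w i j; simp only [Uof, addr_append, sgMap, add_comm]

lemma addr_rep (n j k) : addr (List.replicate n j) (ptA k) = ph n (cv n j k) := by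
  induction n with
  | zero => simp [addr, ptA_ph, cv]
  | succ n ih => rw [List.replicate_succ, cv_succ, ← sgMap_ph, ← ih]; rfl

lemma addr_rep' (n i j k) : addr (i :: List.replicate n j) (ptA k) =
    ph (n + 1) (cv n j k + cs n i) := by
  rw [← sgMap_ph, ← addr_rep]; rfl

lemma J_eq (n) (u : Pt → ℝ) : J n (Uof u) =
    (u (ph (n + 1) (2 ^ n - 1, 1)) - u (ph (n + 1) (2 ^ n, 1))) ^ 2
    + (u (ph (n + 1) (2 ^ n, 2 ^ n - 1)) - u (ph (n + 1) (2 ^ n - 1, 2 ^ n))) ^ 2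
      + (u (ph (n + 1) (1, 2 ^ n - 1)) - u (ph (n + 1) (1, 2 ^ n))) ^ 2 := by
  simp only [J, Uof, addr_rep']
  simp [cv, cs, ev]

lemma P_sum (n) : ∀ u : Pt → ℝ, (5 / 3 : ℝ) ^ n * (1 / 2) *
    ∑ p ∈ P n, (u (ph n p.2) - u (ph n p.1)) ^ 2 = tE n (Uof u) + xE n (Uof u) := by
  induction n with
  | zero =>
    intro u
    have e : P 0 = {(ev 0, ev 1), (ev 1, ev 0), (ev 1, ev 2), (ev 2, ev 1), (ev 0, ev 2),
      (ev 2, ev 0)} := by decide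
    rw [e]
    rw [Finset.sum_insert (by decide), Finset.sum_insert (by decide), Finset.sum_insert (by decide),
      Finset.sum_insert (by decide), Finset.sum_insert (by decide), Finset.sum_singleton]
    simp only [tE, xE, D, Uof, addr, ptA_ph]
    ring
  | succ n ih =>
    intro u
    have c : ∀ i, ∑ p ∈ cellP n i, (u (ph (n + 1) p.2) - u (ph (n + 1) p.1)) ^ 2 =
        ∑ p ∈ P n, ((u ∘ sgMap i) (ph n p.2) - (u ∘ sgMap i) (ph n p.1)) ^ 2 := by
      intro i
      rw [sum_cell n i (fun z => u (ph (n + 1) z))]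
      simp only [Function.comp, sgMap_ph]
    have i0 := ih (u ∘ sgMap 0)
    have i1 := ih (u ∘ sgMap 1)
    have i2 := ih (u ∘ sgMap 2)
    simp only [tE, xE, sh_Uof]
    rw [← c] at i0 i1 i2
    split_ifs with hn
    · subst hn
      rw [P_zero, Finset.sum_union (disj02 0), Finset.sum_union (disj01 0)]
      rw [pow_succ]
      linarith
    · rw [P_succ n hn, Finset.sum_union (disjEx n hn), Finset.sum_union (disj02 n),
        Finset.sum_union (disj01 n), sum_Ex n hn (fun z => u (ph (n + 1) z)), ← J_eq]
      rw [pow_succ]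
      linarith

lemma energy_eq (n) (u : Pt → ℝ) : energy n u = tE n (Uof u) + xE n (Uof u) := by
  rw [← P_sum, energy, energyBi, Vn_eq]
  congr 1
  rw [Finset.sum_image (fun _ _ _ _ h => ph_inj n h), P, Finset.sum_filter, Finset.sum_product]
  refine Finset.sum_congr rfl fun x _ => ?_
  rw [Finset.sum_image (fun _ _ _ _ h => ph_inj n h)]
  refine Finset.sum_congr rfl fun y _ => ?_
  simp only [isEdge_ph, sq]

lemma energy_conv {u : Pt → ℝ} (hu : FiniteEnergy u) :
    ∃ L : ℝ, Tendsto (fun n : ℕ => energy n u) atTop (𝓝 L) := by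
  unfold FiniteEnergy at hu
  simp only [energy_eq] at hu ⊢
  exact tot_conv (compat_Uof u) hu

lemma energy_nonneg (n u) : 0 ≤ energy n u := by
  rw [energy_eq]; exact add_nonneg (tE_nonneg _ _) (xE_nonneg _ _)

lemma energy_add (n) (u v : Pt → ℝ) :
    energy n (u + v) = energy n u + energy n v + 2 * energyBi n u v := by
  have e : ∀ a b c d e : ℝ, a * b + a * c + 2 * (a * d) = a * (b + c + 2 * d) := by intros; ring
  simp only [energy, energyBi]
  rw [e _ _ _ _ 0]
  congr 1
  simp only [Finset.mul_sum, ← Finset.sum_add_distrib]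
  refine Finset.sum_congr rfl fun x _ => Finset.sum_congr rfl fun y _ => ?_
  split_ifs
  · simp only [Pi.add_apply]; ring
  · ring

lemma energyBi_neg (n) (u v : Pt → ℝ) : energyBi n u (-v) = - energyBi n u v := by
  simp only [energyBi, ← mul_neg, ← Finset.sum_neg_distrib]
  congr 1
  refine Finset.sum_congr rfl fun x _ => Finset.sum_congr rfl fun y _ => ?_
  split_ifs
  · simp only [Pi.neg_apply]; ring
  · ring

lemma energy_neg (n) (v : Pt → ℝ) : energy n (-v) = energy n v := by
  simp only [energy, energyBi]
  congr 1
  refine Finset.sum_congr rfl fun x _ => Finset.sum_congr rfl fun y _ => ?_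
  simp only [Pi.neg_apply]
  congr 1; ring

lemma finite_add {u v : Pt → ℝ} (hu : FiniteEnergy u) (hv : FiniteEnergy v) :
    FiniteEnergy (u + v) := by
  obtain ⟨M, hM⟩ := hu
  obtain ⟨K, hK⟩ := hv
  refine ⟨2 * M + 2 * K, ?_⟩
  rintro _ ⟨n, rfl⟩
  have a : energy n u ≤ M := hM ⟨n, rfl⟩
  have b : energy n v ≤ K := hK ⟨n, rfl⟩
  have c := energy_nonneg n (u + -v)
  have d := energy_add n u v
  rw [energy_add, energyBi_neg, energy_neg] at c
  show energy n (u + v) ≤ _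
  linarith

end SGaux

/-- For all `f, g : V* → ℝ` of finite energy, the limit
`𝓔(f,g) = limₙ 𝓔ₙ(f,g)` exists as a finite real number. -/
theorem statement13 (u v : Pt → ℝ) (hu : FiniteEnergy u) (hv : FiniteEnergy v) :
    ∃ L : ℝ, Tendsto (fun n : ℕ => energyBi n u v) atTop (𝓝 L) := by
  have hp := SGaux.energy_conv (SGaux.finite_add hu hv)
  obtain ⟨L, hL⟩ := hp
  obtain ⟨L1, h1⟩ := SGaux.energy_conv hu
  obtain ⟨L2, h2⟩ := SGaux.energy_conv hv
  refine ⟨(L - L1 - L2) / 2, (((hL.sub h1).sub h2).div_const 2).congr fun n => ?_⟩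
  rw [SGaux.energy_add]; ring

end
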